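/- arXiv:1608.06956 — 2 statements merged into one kernel-verified Lean document; each statement's English description precedes it below -/
import Mathlib

section
/- Let f: M → N be a degree-preserving morphism of Z-graded k[t]-modules with t^{2ε}·M = 0. Then N and coker f are 2ε-interleaved; explicitly, the quotient map η: N → coker f and θ: coker f → N given by θ([n]) = t^{2ε}·n satisfy ηθ = multiplication by t^{2ε} and θη = multiplication by t^{2ε}. -/
/-- A `ℤ`-graded `k[t]`-module, i.e. a persistence module over `ℤ`. -/
structure PersMod (k : Type*) [Field k] where
  V : ℤ → Type*
  [grp : ∀ j, AddCommGroup (V j)]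
  [mod : ∀ j, Module k (V j)]
  map : ∀ {i j : ℤ}, i ≤ j → (V i →ₗ[k] V j)
  map_id : ∀ i : ℤ, map (le_refl i) = LinearMap.id
  map_comp : ∀ {i j l : ℤ} (hij : i ≤ j) (hjl : j ≤ l),
    (map hjl).comp (map hij) = map (hij.trans hjl)

attribute [instance] PersMod.grp PersMod.mod

variable {k : Type*} [Field k]

/-- An `ε`-morphism of persistence modules (raises degree by `ε`). -/
structure EHom (M N : PersMod k) (ε : ℕ) where
  f : ∀ j : ℤ, M.V j →ₗ[k] N.V (j + ε)
  natural : ∀ {i j : ℤ} (h : i ≤ j),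
    (f j).comp (M.map h) = (N.map (by omega : (i : ℤ) + (ε : ℤ) ≤ j + (ε : ℤ))).comp (f i)

/-- An `ε`-interleaving: a pair of `ε`-morphisms whose composites in both
orders are multiplication by `t^{2ε}` (the structure maps shifting by `2ε`). -/
structure Interleaving (M N : PersMod k) (ε : ℕ) where
  φ : EHom M N ε
  ψ : EHom N M ε
  comp_φψ : ∀ j : ℤ, (ψ.f (j + ε)).comp (φ.f j)
      = M.map (by omega : (j : ℤ) ≤ j + (ε : ℤ) + (ε : ℤ))
  comp_ψφ : ∀ j : ℤ, (φ.f (j + ε)).comp (ψ.f j)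
      = N.map (by omega : (j : ℤ) ≤ j + (ε : ℤ) + (ε : ℤ))

/-- `t^{2ε} · M = 0`. -/
def IsTrivial (M : PersMod k) (ε : ℕ) : Prop :=
  ∀ j : ℤ, (M.map (by omega : (j : ℤ) ≤ j + 2 * (ε : ℤ))) = 0

/-- A degree-preserving morphism of persistence modules. -/
structure Hom0 (M N : PersMod k) where
  f : ∀ j : ℤ, M.V j →ₗ[k] N.V j
  natural : ∀ {i j : ℤ} (h : i ≤ j), (f j).comp (M.map h) = (N.map h).comp (f i)

/-- `0 → M → N → P → 0` is a short exact sequence of degree-preserving morphisms. -/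
def IsShortExact {M N P : PersMod k} (f : Hom0 M N) (g : Hom0 N P) : Prop :=
  (∀ j : ℤ, Function.Injective (f.f j)) ∧ (∀ j : ℤ, Function.Surjective (g.f j)) ∧
    ∀ j : ℤ, LinearMap.range (f.f j) = LinearMap.ker (g.f j)

/-- The zero persistence module. -/
def zeroPM : PersMod k where
  V _ := PUnit
  map _ := 0
  map_id _ := LinearMap.ext fun _ => rfl
  map_comp _ _ := LinearMap.ext fun _ => rfl

/-- The cokernel of a degree-preserving morphism, as a persistence module. -/
def cokerPM {M N : PersMod k} (f : Hom0 M N) : PersMod k where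
  V j := N.V j ⧸ LinearMap.range (f.f j)
  map {i j} h := Submodule.mapQ _ _ (N.map h) (by
    rintro x ⟨m, rfl⟩
    have h1 := LinearMap.congr_fun (f.natural h) m
    simp only [LinearMap.coe_comp, Function.comp_apply] at h1
    exact Submodule.mem_comap.mpr ⟨M.map h m, h1⟩)
  map_id i := by
    apply LinearMap.ext
    intro x
    obtain ⟨y, rfl⟩ := Submodule.Quotient.mk_surjective _ x
    rw [Submodule.mapQ_apply, N.map_id]
    rfl
  map_comp {i j l} hij hjl := by
    apply LinearMap.ext
    intro x
    obtain ⟨y, rfl⟩ := Submodule.Quotient.mk_surjective _ x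
    simp only [LinearMap.coe_comp, Function.comp_apply, Submodule.mapQ_apply]
    rw [← LinearMap.comp_apply, N.map_comp]

namespace PersMod

theorem map_map (N : PersMod k) {i j l : ℤ} (hij : i ≤ j) (hjl : j ≤ l) (x : N.V i) :
    N.map hjl (N.map hij x) = N.map (hij.trans hjl) x :=
  LinearMap.congr_fun (N.map_comp hij hjl) x

end PersMod

theorem IsTrivial.map_eq_zero {M : PersMod k} {ε : ℕ} (hM : IsTrivial M ε) {i j : ℤ}
    (h : i ≤ j) (hj : i + 2 * (ε : ℤ) ≤ j) : M.map h = 0 := by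
  rw [← M.map_comp (by omega) hj, hM i, LinearMap.comp_zero]

namespace Hom0

variable {M N : PersMod k}

theorem range_le_ker_map (f : Hom0 M N) {i j : ℤ} (h : i ≤ j) (h0 : M.map h = 0) :
    LinearMap.range (f.f i) ≤ LinearMap.ker (N.map h) := by
  rw [LinearMap.range_le_ker_iff, ← f.natural h, h0, LinearMap.comp_zero]

/-- The quotient map `N → coker f`. -/
def cokerProj (f : Hom0 M N) : Hom0 N (cokerPM f) where
  f j := (LinearMap.range (f.f j)).mkQ
  natural _ := rfl

/-- The quotient map followed by multiplication by `t ^ δ`. -/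
def cokerProjShift (f : Hom0 M N) (δ : ℕ) : EHom N (cokerPM f) δ where
  f j := ((cokerPM f).map (by omega)).comp (f.cokerProj.f j)
  natural {i j} h := by
    refine LinearMap.ext fun x => ?_
    change Submodule.Quotient.mk (N.map _ (N.map _ x)) =
      Submodule.Quotient.mk (N.map _ (N.map _ x))
    rw [N.map_map, N.map_map]

theorem cokerProjShift_f (f : Hom0 M N) (δ : ℕ) (j : ℤ) :
    (f.cokerProjShift δ).f j = ((cokerPM f).map (by omega)).comp (f.cokerProj.f j) :=
  rfl

/-- The map `coker f → N`, `[n] ↦ t ^ (2 * ε) • n`, when `t ^ (2 * ε)` kills `M`. -/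
def cokerLift (f : Hom0 M N) {ε : ℕ} (hM : IsTrivial M ε) :
    EHom (cokerPM f) N (2 * ε) where
  f j := (LinearMap.range (f.f j)).liftQ (N.map (by omega))
    (f.range_le_ker_map _ (hM.map_eq_zero _ (by push_cast; rfl)))
  natural {i j} h := by
    refine LinearMap.ext fun x => ?_
    obtain ⟨y, rfl⟩ := Submodule.Quotient.mk_surjective _ x
    change N.map _ (N.map _ y) = N.map _ (N.map _ y)
    rw [N.map_map, N.map_map]

/-- `θ η`, for `η = cokerProj` and `θ = cokerLift`, is multiplication by `t ^ (2 * ε)` on `N`. -/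
theorem cokerLift_comp_cokerProj (f : Hom0 M N) {ε : ℕ} (hM : IsTrivial M ε) (j : ℤ) :
    ((f.cokerLift hM).f j).comp (f.cokerProj.f j) = N.map (by omega) :=
  rfl

/-- `η θ`, for `η = cokerProj` and `θ = cokerLift`, is multiplication by `t ^ (2 * ε)` on `coker f`. -/
theorem cokerProj_comp_cokerLift (f : Hom0 M N) {ε : ℕ} (hM : IsTrivial M ε) (j : ℤ) :
    (f.cokerProj.f (j + (2 * ε : ℕ))).comp ((f.cokerLift hM).f j) =
      (cokerPM f).map (by omega) := by
  refine LinearMap.ext fun x => ?_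
  obtain ⟨y, rfl⟩ := Submodule.Quotient.mk_surjective _ x
  rfl

end Hom0

/-- If the domain of `f : M → N` satisfies `t^{2ε}·M = 0`, then `N` and
`coker f` are `2ε`-interleaved. -/
theorem coker_interleaved {M N : PersMod k} (ε : ℕ) (f : Hom0 M N) (hM : IsTrivial M ε) :
    Nonempty (Interleaving N (cokerPM f) (2 * ε)) := by
  refine ⟨⟨f.cokerProjShift (2 * ε), f.cokerLift hM, fun j => ?_, fun j => ?_⟩⟩
  · rw [Hom0.cokerProjShift_f, ← f.cokerProj.natural, ← LinearMap.comp_assoc,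
      f.cokerLift_comp_cokerProj hM, N.map_comp]
  · rw [Hom0.cokerProjShift_f, LinearMap.comp_assoc, f.cokerProj_comp_cokerLift hM,
      (cokerPM f).map_comp]
end

section
/- Left interleavings satisfy a triangle inequality: if M is 2ε₁-left interleaved with N and N is 2ε₂-left interleaved with P, then M is 2(ε₁+ε₂)-left interleaved with P. -/
universe u v

variable {k : Type*} [Field k]

/-- `M` is `2ε`-left interleaved with `N`: there is a short exact sequence
`0 → M → N → Q → 0` with `t^{2ε}·Q = 0`. -/
def LeftInterleaved {k : Type u} [Field k] (M N : PersMod.{u, v} k) (ε : ℕ) : Prop :=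
  ∃ (Q : PersMod.{u, v} k) (f : Hom0 M N) (g : Hom0 N Q), IsShortExact f g ∧ IsTrivial Q ε

namespace Hom0

theorem map_apply {M N : PersMod k} (f : Hom0 M N) {i j : ℤ} (h : i ≤ j) (x : M.V i) :
    f.f j (M.map h x) = N.map h (f.f i x) :=
  LinearMap.congr_fun (f.natural h) x

/-- The composite of two degree-preserving morphisms. -/
def comp {M N P : PersMod k} (g : Hom0 N P) (f : Hom0 M N) : Hom0 M P where
  f j := (g.f j).comp (f.f j)
  natural h := LinearMap.ext fun x => by simp [map_apply]

/-- The cokernel of a degree-preserving morphism. -/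
def coker {k : Type u} [Field k] {M N : PersMod.{u, v} k} (f : Hom0 M N) :
    PersMod.{u, v} k where
  V j := N.V j ⧸ LinearMap.range (f.f j)
  map {i j} h := Submodule.mapQ _ _ (N.map h) <| by
    rintro _ ⟨x, rfl⟩
    exact ⟨M.map h x, f.map_apply h x⟩
  map_id i := Submodule.linearMap_qext _ <| LinearMap.ext fun x => by simp [N.map_id]
  map_comp hij hjl := Submodule.linearMap_qext _ <| LinearMap.ext fun x => by
    simp [← N.map_comp hij hjl]

/-- The projection onto the cokernel. -/
def cokerπ {k : Type u} [Field k] {M N : PersMod.{u, v} k} (f : Hom0 M N) :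
    Hom0 N f.coker where
  f j := (LinearMap.range (f.f j)).mkQ
  natural _ := rfl

theorem isShortExact_cokerπ {k : Type u} [Field k] {M N : PersMod.{u, v} k} (f : Hom0 M N)
    (hf : ∀ j, Function.Injective (f.f j)) : IsShortExact f f.cokerπ :=
  ⟨hf, fun j => (LinearMap.range (f.f j)).mkQ_surjective,
    fun j => (LinearMap.range (f.f j)).ker_mkQ.symm⟩

theorem isTrivial_coker_iff {k : Type u} [Field k] {M N : PersMod.{u, v} k} (f : Hom0 M N)
    (ε : ℕ) : IsTrivial f.coker ε ↔
      ∀ (j : ℤ) (x : N.V j),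
        N.map (by omega : j ≤ j + 2 * (ε : ℤ)) x ∈ LinearMap.range (f.f (j + 2 * (ε : ℤ))) := by
  refine forall_congr' fun j => ⟨fun h x => ?_, fun h => ?_⟩
  · exact (Submodule.Quotient.mk_eq_zero _).1
      (LinearMap.congr_fun h (Submodule.Quotient.mk x))
  · exact Submodule.linearMap_qext _ <| LinearMap.ext fun x =>
      (Submodule.Quotient.mk_eq_zero _).2 (h x)

end Hom0

theorem PersMod.map_map_s9 (M : PersMod k) {i j l : ℤ} (hij : i ≤ j) (hjl : j ≤ l) (x : M.V i) :
    M.map hjl (M.map hij x) = M.map (hij.trans hjl) x :=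
  LinearMap.congr_fun (M.map_comp hij hjl) x

/-- If the cokernel term of a short exact sequence is killed by `t^{2ε}`, then `t^{2ε}` maps the
middle term into the image of the first. -/
theorem IsShortExact.map_mem_range {M N Q : PersMod k} {f : Hom0 M N} {g : Hom0 N Q}
    (h : IsShortExact f g) {ε : ℕ} (hQ : IsTrivial Q ε) {i j : ℤ} (hij : i ≤ j)
    (hj : j = i + 2 * (ε : ℤ)) (x : N.V i) : N.map hij x ∈ LinearMap.range (f.f j) := by
  subst hj
  rw [h.2.2, LinearMap.mem_ker, g.map_apply, hQ i, LinearMap.zero_apply]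

/-- Triangle inequality for left interleavings. -/
theorem left_interleaved_triangle (M N P : PersMod k) (ε₁ ε₂ : ℕ)
    (h1 : LeftInterleaved M N ε₁) (h2 : LeftInterleaved N P ε₂) :
    LeftInterleaved M P (ε₁ + ε₂) := by
  obtain ⟨Q₁, f₁, g₁, hs₁, hQ₁⟩ := h1
  obtain ⟨Q₂, f₂, g₂, hs₂, hQ₂⟩ := h2
  refine ⟨(f₂.comp f₁).coker, f₂.comp f₁, (f₂.comp f₁).cokerπ,
    Hom0.isShortExact_cokerπ _ fun j => (hs₂.1 j).comp (hs₁.1 j),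
    (Hom0.isTrivial_coker_iff _ _).2 fun j x => ?_⟩
  have hj : j ≤ j + 2 * (ε₂ : ℤ) := by omega
  have hj' : j + 2 * (ε₂ : ℤ) ≤ j + 2 * ((ε₁ + ε₂ : ℕ) : ℤ) := by omega
  obtain ⟨y, hy⟩ := hs₂.map_mem_range hQ₂ hj rfl x
  obtain ⟨z, hz⟩ := hs₁.map_mem_range hQ₁ hj' (by push_cast; ring) y
  refine ⟨z, ?_⟩
  rw [← P.map_map_s9 hj hj', ← hy, ← f₂.map_apply, ← hz]
  rfl
end
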